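/- Let (V, w, d) be a finite weighted metric space, X ⊆ V a nonempty subset, k ≥ 1 an integer, and R ⊆ X a subset with |R| ≥ k. For S ⊆ V write cost(S, X) = ∑_{x∈X} w(x)·min_{y∈S} d(x,y), and let OPT_k(X) = min over S ⊆ X with |S| = k of cost(S, X). Then min over S ⊆ R with |S| = k of cost(S, X) ≤ cost(R, X) + 2·OPT_k(X). -/

import Mathlib

/-!
Snap each center `o` of a solution `O ⊆ X` with `k` centers to a point `r o` of `R` nearest to `o`,
and pad the resulting set to `S ⊆ R` of size exactly `k` (padding only lowers distances).
If `o ∈ O` and `y ∈ R` are nearest to `x`, then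
`d(x, r o) ≤ d(x, o) + d(o, r o) ≤ d(x, o) + d(o, y) ≤ 2 d(x, o) + d(x, y)`,
so `d(x, S) ≤ d(x, R) + 2 d(x, O)` pointwise (`distToSet_le_of_snap`). Summing with weights gives
`cost(S, X) ≤ cost(R, X) + 2 cost(O, X)`, and taking the infimum over `O` gives the theorem.
-/

open Finset

/-- Distance from a point to a (nonempty) finite set: `min_{y ∈ S} d(x,y)`. -/
noncomputable def distToSet {V : Type*} [MetricSpace V] (x : V) (S : Finset V) : ℝ :=
  sInf ((fun y => dist x y) '' ↑S)

/-- `k`-median cost of a center set `S` with respect to the point set `U`: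
`∑_{x ∈ U} w(x) · d(x, S)`. -/
noncomputable def kCost {V : Type*} [MetricSpace V] (w : V → NNReal) (S U : Finset V) : ℝ :=
  ∑ x ∈ U, (w x : ℝ) * distToSet x S

/-- `OPT_k(U, X)`: minimum over `S ⊆ X` with `|S| = k` of `kCost w S U`. -/
noncomputable def kOPT {V : Type*} [MetricSpace V] (w : V → NNReal) (k : ℕ) (U X : Finset V) : ℝ :=
  sInf {c : ℝ | ∃ S : Finset V, S ⊆ X ∧ S.card = k ∧ c = kCost w S U}

lemma distToSet_le {V : Type*} [MetricSpace V] (x : V) {S : Finset V} {y : V} (hy : y ∈ S) :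
    distToSet x S ≤ dist x y :=
  csInf_le ⟨0, by rintro _ ⟨z, -, rfl⟩; exact dist_nonneg⟩ ⟨y, hy, rfl⟩

lemma exists_distToSet_eq {V : Type*} [MetricSpace V] (x : V) {S : Finset V} (hS : S.Nonempty) :
    ∃ y ∈ S, dist x y = distToSet x S := by
  have hne : ((fun y => dist x y) '' (S : Set V)).Nonempty := hS.to_set.image _
  obtain ⟨y, hy, h⟩ := hne.csInf_mem (S.finite_toSet.image _)
  exact ⟨y, hy, h⟩

lemma distToSet_nonneg {V : Type*} [MetricSpace V] (x : V) (S : Finset V) :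
    0 ≤ distToSet x S :=
  Real.sInf_nonneg (by rintro _ ⟨z, -, rfl⟩; exact dist_nonneg)

lemma kCost_nonneg {V : Type*} [MetricSpace V] (w : V → NNReal) (S U : Finset V) :
    0 ≤ kCost w S U :=
  Finset.sum_nonneg fun x _ => mul_nonneg (w x).2 (distToSet_nonneg x S)

lemma kOPT_le {V : Type*} [MetricSpace V] (w : V → NNReal) {k : ℕ} {S U X : Finset V}
    (hS : S ⊆ X) (hk : S.card = k) : kOPT w k U X ≤ kCost w S U :=
  csInf_le ⟨0, by rintro _ ⟨T, -, -, rfl⟩; exact kCost_nonneg w T U⟩ ⟨S, hS, hk, rfl⟩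

/-- If `S` contains, for every `o ∈ O`, a point `r o` realizing the distance from `o` to `R`,
then using `S` in place of `R` costs at most twice the distance to `O`. -/
lemma distToSet_le_of_snap {V : Type*} [MetricSpace V] {S R O : Finset V} (hR : R.Nonempty)
    (hO : O.Nonempty) (r : V → V) (hr : ∀ o, dist o (r o) = distToSet o R)
    (hS : ∀ o ∈ O, r o ∈ S) (x : V) :
    distToSet x S ≤ distToSet x R + 2 * distToSet x O := by
  obtain ⟨o, ho, hxo⟩ := exists_distToSet_eq x hO
  obtain ⟨y, hy, hxy⟩ := exists_distToSet_eq x hR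
  have h1 := distToSet_le x (hS o ho)
  have h2 := dist_triangle x o (r o)
  have h3 := distToSet_le o hy
  have h4 := dist_triangle_left o y x
  linarith [hr o]

/-- `min_{S ⊆ R, |S| = k} cost(S, X) ≤ cost(R, X) + 2 · OPT_k(X)`. -/
theorem restricted_opt_le {V : Type*} [Fintype V] [MetricSpace V]
    (w : V → NNReal) (X R : Finset V) (hX : X.Nonempty)
    (k : ℕ) (hk : 1 ≤ k) (hRX : R ⊆ X) (hRk : k ≤ R.card) :
    kOPT w k X R ≤ kCost w R X + 2 * kOPT w k X X := by
  classical
  have hR : R.Nonempty := Finset.card_pos.mp (by omega)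
  choose r hrR hr using fun o : V => exists_distToSet_eq o hR
  -- It suffices to bound the cost of every candidate `O`, so no optimal `O` has to be chosen.
  suffices h : (kOPT w k X R - kCost w R X) / 2 ≤ kOPT w k X X by linarith
  refine le_csInf ?_ ?_
  · obtain ⟨T, hT, hTk⟩ := Finset.exists_subset_card_eq hRk
    exact ⟨_, T, hT.trans hRX, hTk, rfl⟩
  · rintro _ ⟨O, -, hOk, rfl⟩
    have hO : O.Nonempty := Finset.card_pos.mp (by omega)
    -- `r` need not be injective on `O`, so its image is padded to `k` elements inside `R`.
    obtain ⟨S, hrS, hSR, hSk⟩ := Finset.exists_subsuperset_card_eq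
      (Finset.image_subset_iff.mpr fun o _ => hrR o : O.image r ⊆ R)
      (Finset.card_image_le.trans hOk.le) hRk
    have hcost : kCost w S X ≤ kCost w R X + 2 * kCost w O X := by
      unfold kCost
      rw [Finset.mul_sum, ← Finset.sum_add_distrib]
      refine Finset.sum_le_sum fun x _ => ?_
      have hx := distToSet_le_of_snap hR hO r hr
        (fun o ho => hrS (Finset.mem_image_of_mem r ho)) x
      calc (w x : ℝ) * distToSet x S
          ≤ w x * (distToSet x R + 2 * distToSet x O) :=
            mul_le_mul_of_nonneg_left hx (w x).2
        _ = w x * distToSet x R + 2 * (w x * distToSet x O) := by ring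
    linarith [kOPT_le w (U := X) hSR hSk]
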